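/- Let X be a normal, initially κ-compact Hausdorff space with wL(X) ≤ κ and t(X) ≤ κ. Then every cover of X by G_κ sets (intersections of at most κ many open sets) has a subfamily of cardinality at most 2^κ whose union is dense in the G_κ modification X_κ, i.e., wL(X_κ) ≤ 2^κ. -/

import Mathlib

open Set Cardinal TopologicalSpace

universe u

/-- `X` is initially `κ`-compact: every open cover of size at most `κ` has a finite
subcover. -/
def InitiallyCompact (κ : Cardinal.{u}) (X : Type u) [TopologicalSpace X] : Prop :=
  ∀ 𝒰 : Set (Set X), (∀ u ∈ 𝒰, IsOpen u) → ⋃₀ 𝒰 = Set.univ → #𝒰 ≤ κ →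
    ∃ 𝒱 ⊆ 𝒰, 𝒱.Finite ∧ ⋃₀ 𝒱 = Set.univ

/-- The tightness of `X` is at most `κ`. -/
def TightnessLE (X : Type u) [TopologicalSpace X] (κ : Cardinal.{u}) : Prop :=
  ∀ (A : Set X) (x : X), x ∈ closure A → ∃ B ⊆ A, #B ≤ κ ∧ x ∈ closure B

/-- `wL(X) ≤ κ`: every open cover of `X` has a subfamily of size at most `κ` with dense
union. -/
def WLLE (X : Type u) [TopologicalSpace X] (κ : Cardinal.{u}) : Prop :=
  ∀ 𝒰 : Set (Set X), (∀ u ∈ 𝒰, IsOpen u) → ⋃₀ 𝒰 = Set.univ →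
    ∃ 𝒱 ⊆ 𝒰, #𝒱 ≤ κ ∧ Dense (⋃₀ 𝒱)

/-- `G` is a `G_κ` set: an intersection of at most `κ` many open sets. -/
def IsGKappa (κ : Cardinal.{u}) {X : Type u} [TopologicalSpace X] (G : Set X) : Prop :=
  ∃ (ι : Type u) (U : ι → Set X), #ι ≤ κ ∧ (∀ i, IsOpen (U i)) ∧ G = ⋂ i, U i

theorem IsGKappa.inter {κ : Cardinal.{u}} (hκ : ℵ₀ ≤ κ) {X : Type u} [TopologicalSpace X]
    {G H : Set X} (hG : IsGKappa κ G) (hH : IsGKappa κ H) : IsGKappa κ (G ∩ H) := by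
  obtain ⟨ι, U, hι, hU, rfl⟩ := hG
  obtain ⟨ι', U', hι', hU', rfl⟩ := hH
  refine ⟨ι ⊕ ι', Sum.elim U U', ?_, ?_, ?_⟩
  · rw [mk_sum, lift_id, lift_id]
    exact add_le_of_le hκ hι hι'
  · rintro (i | i)
    exacts [hU i, hU' i]
  · rw [iInter_sum]
    rfl

theorem IsGKappa.univ (κ : Cardinal.{u}) (X : Type u) [TopologicalSpace X] :
    IsGKappa κ (Set.univ : Set X) :=
  ⟨PEmpty, fun _ => Set.univ, by simp, fun _ => isOpen_univ, by simp⟩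

/-- A `G_κ` set can be indexed by any type of cardinality `κ`. -/
theorem IsGKappa.exists_eq_iInter {κ : Cardinal.{u}} {X I : Type u} [TopologicalSpace X]
    (hI : #I = κ) {G : Set X} (hG : IsGKappa κ G) :
    ∃ U : I → Set X, (∀ i, IsOpen (U i)) ∧ G = ⋂ i, U i := by
  obtain ⟨ι, U, hι, hU, rfl⟩ := hG
  rw [← hI] at hι
  obtain ⟨e⟩ := hι
  refine ⟨Function.extend e U fun _ => Set.univ, fun i => ?_, ?_⟩
  · by_cases h : ∃ j, e j = i
    · obtain ⟨j, rfl⟩ := h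
      rw [e.injective.extend_apply]
      exact hU j
    · rw [Function.extend_apply' _ _ _ h]
      exact isOpen_univ
  · ext x
    simp only [mem_iInter]
    constructor
    · intro hx i
      by_cases h : ∃ j, e j = i
      · obtain ⟨j, rfl⟩ := h
        rw [e.injective.extend_apply]
        exact hx j
      · rw [Function.extend_apply' _ _ _ h]
        trivial
    · intro hx j
      have := hx (e j)
      rwa [e.injective.extend_apply] at this

/-- The `G_κ` sets form a base of the `G_κ` modification. -/
theorem IsGKappa.exists_subset_of_isOpen_generateFrom {κ : Cardinal.{u}} (hκ : ℵ₀ ≤ κ)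
    {X : Type u} [TopologicalSpace X] {O : Set X}
    (hO : GenerateOpen {s : Set X | IsGKappa κ s} O) {x : X} (hx : x ∈ O) :
    ∃ G, IsGKappa κ G ∧ x ∈ G ∧ G ⊆ O := by
  induction hO with
  | basic s hs => exact ⟨s, hs, hx, Subset.rfl⟩
  | univ => exact ⟨Set.univ, IsGKappa.univ κ X, trivial, Subset.rfl⟩
  | inter s t _ _ ihs iht =>
    obtain ⟨G, hG, hxG, hGs⟩ := ihs hx.1
    obtain ⟨H, hH, hxH, hHt⟩ := iht hx.2
    exact ⟨G ∩ H, hG.inter hκ hH, ⟨hxG, hxH⟩, inter_subset_inter hGs hHt⟩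
  | sUnion S _ ih =>
    obtain ⟨s, hs, hxs⟩ := hx
    obtain ⟨G, hG, hxG, hGs⟩ := ih s hs hxs
    exact ⟨G, hG, hxG, hGs.trans (subset_sUnion_of_mem hs)⟩

/-- In a regular space, a point of a `G_κ` set lies in an intersection of `κ` many open sets
whose closures intersect inside the given set. -/
theorem IsGKappa.exists_closure_subset {κ : Cardinal.{u}} {X I : Type u} [TopologicalSpace X]
    [RegularSpace X] (hI : #I = κ) {G : Set X} (hG : IsGKappa κ G) {x : X} (hx : x ∈ G) :
    ∃ V : I → Set X, (∀ i, IsOpen (V i)) ∧ (∀ i, x ∈ V i) ∧ ⋂ i, closure (V i) ⊆ G := by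
  obtain ⟨U, hU, rfl⟩ := hG.exists_eq_iInter hI
  have h : ∀ i, ∃ V, IsOpen V ∧ x ∈ V ∧ closure V ⊆ U i := fun i => by
    obtain ⟨V, ⟨hxV, hV⟩, hVU⟩ :=
      ((hU i).mem_nhds (mem_iInter.1 hx i) |> (nhds_basis_opens x).nhds_closure.mem_iff.1)
    exact ⟨V, hV, hxV, hVU⟩
  choose V hV hxV hVU using h
  exact ⟨V, hV, hxV, iInter_mono hVU⟩

theorem InitiallyCompact.exists_finset_subset {κ : Cardinal.{u}} (hκ : ℵ₀ ≤ κ) {X : Type u}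
    [TopologicalSpace X] (hX : InitiallyCompact κ X) {K : Type u} (hK : #K ≤ κ)
    {O : K → Set X} (hO : ∀ k, IsOpen (O k)) {F : Set X} (hF : IsClosed F)
    (hFO : F ⊆ ⋃ k, O k) : ∃ t : Finset K, F ⊆ ⋃ k ∈ t, O k := by
  classical
  obtain ⟨𝒱, h𝒱, hfin, hcov⟩ := hX (insert Fᶜ (range O))
    (by
      rintro u (rfl | ⟨k, rfl⟩)
      exacts [hF.isOpen_compl, hO k])
    (by
      rw [sUnion_insert, sUnion_range]
      exact eq_univ_of_forall fun x => (em (x ∈ F)).elim (fun h => Or.inr (hFO h)) Or.inl)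
    ((mk_insert_le).trans (add_le_of_le hκ (mk_range_le.trans hK) (one_le_aleph0.trans hκ)))
  have hsub : 𝒱 \ {Fᶜ} ⊆ range O := fun v hv => (h𝒱 hv.1).resolve_left hv.2
  rw [← image_univ, ← hfin.sdiff.coe_toFinset, Finset.subset_set_image_iff] at hsub
  obtain ⟨t, -, ht⟩ := hsub
  refine ⟨t, fun x hx => ?_⟩
  obtain ⟨v, hv, hxv⟩ : x ∈ ⋃₀ 𝒱 := hcov ▸ mem_univ x
  have hvt : v ∈ t.image O := by
    rw [ht, Set.Finite.mem_toFinset]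
    refine ⟨hv, ?_⟩
    rintro rfl
    exact hxv hx
  obtain ⟨k, hk, rfl⟩ := Finset.mem_image.1 hvt
  exact mem_iUnion₂.2 ⟨k, hk, hxv⟩

/-- In a normal space, `wL(X) ≤ κ` bounds the weak Lindelöf degree of closed subsets. -/
theorem WLLE.exists_subset_closure {κ : Cardinal.{u}} {X : Type u} [TopologicalSpace X]
    [NormalSpace X] (hX : WLLE X κ) {F : Set X} (hF : IsClosed F) {𝒲 : Set (Set X)}
    (h𝒲 : ∀ W ∈ 𝒲, IsOpen W) (hcov : F ⊆ ⋃₀ 𝒲) :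
    ∃ 𝒱 ⊆ 𝒲, #𝒱 ≤ κ ∧ F ⊆ closure (⋃₀ 𝒱) := by
  obtain ⟨O, hO, hFO, hO𝒲⟩ := normal_exists_closure_subset hF (isOpen_sUnion h𝒲) hcov
  obtain ⟨𝒱, h𝒱, hcard, hdense⟩ := hX (insert (closure O)ᶜ 𝒲)
    (by
      rintro u (rfl | hu)
      exacts [isClosed_closure.isOpen_compl, h𝒲 u hu])
    (by
      rw [sUnion_insert]
      exact eq_univ_of_forall fun x =>
        (em (x ∈ closure O)).elim (fun h => Or.inr (hO𝒲 h)) Or.inl)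
  refine ⟨𝒱 ∩ 𝒲, inter_subset_right, (mk_le_mk_of_subset inter_subset_left).trans hcard,
    fun x hx => mem_closure_iff.2 fun N hN hxN => ?_⟩
  obtain ⟨y, ⟨hyN, hyO⟩, v, hv, hyv⟩ :=
    hdense.inter_open_nonempty (N ∩ O) (hN.inter hO) ⟨x, hxN, hFO hx⟩
  refine ⟨y, hyN, v, ⟨hv, (h𝒱 hv).resolve_left ?_⟩, hyv⟩
  rintro rfl
  exact hyv (subset_closure hyO)

/-- Every point lies in a set of size at most `2 ^ κ` closed under `2 ^ κ` many operations of
arity `κ`. -/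
theorem exists_mk_le_two_pow_closed_under {κ : Cardinal.{u}} (hκ : ℵ₀ ≤ κ) {X L J : Type u}
    (hL : #L ≤ 2 ^ κ) (hJ : #J ≤ κ) (c : L → (J → X) → X) (x₀ : X) :
    ∃ S : Set X, x₀ ∈ S ∧ #S ≤ 2 ^ κ ∧ ∀ l g, (∀ j, g j ∈ S) → c l g ∈ S := by
  let β : Option L → Type u := fun o => o.elim PEmpty fun _ => J
  let step : (Σ o : Option L, β o → X) → X := fun
    | ⟨none, _⟩ => x₀
    | ⟨some l, g⟩ => c l g
  refine ⟨range (WType.elim (β := β) X step), ⟨WType.mk none PEmpty.elim, rfl⟩, ?_, ?_⟩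
  · refine mk_range_le.trans (WType.cardinalMk_le_of_le ?_)
    have h2 : ℵ₀ ≤ 2 ^ κ := hκ.trans (cantor κ).le
    have hle : ∀ o, ((2 : Cardinal.{u}) ^ κ) ^ #(β o) ≤ 2 ^ κ := by
      intro o
      rw [← power_mul]
      refine power_le_power_left two_ne_zero ?_
      have : #(β o) ≤ κ := by
        cases o
        · exact (mk_pempty).le.trans zero_le
        · exact hJ
      exact mul_le_of_le hκ le_rfl this
    refine (sum_le_sum _ _ hle).trans ?_
    rw [sum_const', mk_option]
    exact mul_le_of_le h2 (add_le_of_le h2 hL (one_le_aleph0.trans h2)) le_rfl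
  · intro l g hg
    choose w hw using hg
    exact ⟨WType.mk (some l) w, congrArg (c l) (funext hw)⟩

/-- Let `X` be a normal, initially `κ`-compact Hausdorff space with `wL(X) ≤ κ` and
tightness at most `κ`. Then every cover of `X` by `G_κ` sets has a subfamily of cardinality
at most `2^κ` whose union is dense in the `G_κ` modification `X_κ`, i.e. `wL(X_κ) ≤ 2^κ`. -/
theorem wL_G_kappa_modification_le_two_pow
    (κ : Cardinal.{u}) (hκ : ℵ₀ ≤ κ)
    (X : Type u) [TopologicalSpace X] [T2Space X] [NormalSpace X]
    (hcpt : InitiallyCompact κ X) (hwl : WLLE X κ) (ht : TightnessLE X κ)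
    (𝒰 : Set (Set X)) (h𝒰 : ∀ u ∈ 𝒰, IsGKappa κ u) (hcov : ⋃₀ 𝒰 = Set.univ) :
    ∃ 𝒱 ⊆ 𝒰, #𝒱 ≤ 2 ^ κ ∧
      @Dense X (TopologicalSpace.generateFrom {s : Set X | IsGKappa κ s}) (⋃₀ 𝒱) := by
  classical
  obtain hX | ⟨⟨x₀⟩⟩ := isEmpty_or_nonempty X
  · exact ⟨∅, empty_subset _, by simp, fun x => hX.elim x⟩
  obtain ⟨I, hI⟩ : ∃ I : Type u, #I = κ := ⟨κ.out, mk_out κ⟩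
  have hIinf : Infinite I := infinite_iff.2 (hI ▸ hκ)
  let B : (I → I → X) → Set X := fun f => ⋂ i, closure (range (f i))
  have hB : ∀ f, IsClosed (B f) := fun f => isClosed_iInter fun i => isClosed_closure
  -- choose a member of the cover and shrinkings of its open factors for each family `f`
  have hchoice : ∀ f, ∃ (U : Set X) (W : I → Set X), (∀ i, IsOpen (W i)) ∧
      ((∃ U ∈ 𝒰, B f ⊆ U) →
        U ∈ 𝒰 ∧ (∀ i, B f ⊆ W i) ∧ ⋂ i, closure (W i) ⊆ U) := by
    intro f
    by_cases h : ∃ U ∈ 𝒰, B f ⊆ U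
    · obtain ⟨U, hU, hBU⟩ := h
      obtain ⟨P, hP, rfl⟩ := (h𝒰 U hU).exists_eq_iInter hI
      have := fun i => normal_exists_closure_subset (hB f) (hP i) (hBU.trans (iInter_subset P i))
      choose W hW hBW hWP using this
      exact ⟨_, W, hW, fun _ => ⟨hU, hBW, iInter_mono hWP⟩⟩
    · exact ⟨∅, fun _ => Set.univ, fun _ => isOpen_univ, fun h' => absurd h' h⟩
  choose U W hWo hUW using hchoice
  let Wf : (I → I → X) → Finset I → Set X := fun f s => ⋂ i ∈ s, W f i
  have hWfo : ∀ f s, IsOpen (Wf f s) := fun f s => isOpen_biInter_finset fun i _ => hWo f i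
  let D : (I → Finset I) → (I × I × I → X) → Set X := fun l g =>
    ⋃ j, Wf (fun a b => g (j, a, b)) (l j)
  have hpoint : ∀ l g, ∃ y, ¬ Dense (D l g) → y ∉ closure (D l g) := by
    intro l g
    by_cases h : ∃ y, y ∉ closure (D l g)
    · exact h.imp fun y hy _ => hy
    · exact ⟨x₀, fun hd => absurd (fun y => not_not.1 fun hy => h ⟨y, hy⟩) hd⟩
  choose c hc using hpoint
  have hpow : ((2 : Cardinal.{u}) ^ κ) ^ κ = 2 ^ κ := by
    rw [← power_mul, mul_eq_self hκ]
  obtain ⟨S, hx₀S, hScard, hSc⟩ := exists_mk_le_two_pow_closed_under hκ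
    (by
      rw [← power_def, mk_finset_of_infinite, hI]
      exact (power_self_eq hκ).le)
    (by simp [hI, mul_eq_self hκ]) c x₀
  refine ⟨{u | ∃ f : I → I → X, (∀ i j, f i j ∈ S) ∧ (∃ U ∈ 𝒰, B f ⊆ U) ∧ u = U f},
    ?_, ?_, ?_⟩
  · rintro _ ⟨f, -, hf, rfl⟩
    exact (hUW f hf).1
  · have hsub : {u | ∃ f : I → I → X, (∀ i j, f i j ∈ S) ∧ (∃ U ∈ 𝒰, B f ⊆ U) ∧ u = U f} ⊆
        range fun f : I → I → S => U fun i j => f i j := by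
      rintro _ ⟨f, hfS, -, rfl⟩
      exact ⟨fun i j => ⟨f i j, hfS i j⟩, rfl⟩
    refine (mk_le_mk_of_subset hsub).trans (mk_range_le.trans ?_)
    rw [← power_def, ← power_def, hI]
    calc (#S ^ κ) ^ κ ≤ ((2 ^ κ) ^ κ) ^ κ :=
          power_le_power_right (power_le_power_right hScard)
      _ = 2 ^ κ := by rw [hpow, hpow]
  intro p
  refine (@mem_closure_iff X (generateFrom _) _ _).2 fun O hO hpO => ?_
  obtain ⟨G, hG, hpG, hGO⟩ := IsGKappa.exists_subset_of_isOpen_generateFrom hκ hO hpO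
  by_contra hne
  obtain ⟨V, hVo, hpV, hVG⟩ := hG.exists_closure_subset hI hpG
  let Vf : Finset I → Set X := fun t => ⋂ i ∈ t, V i
  have hFc : IsClosed (closure S) := isClosed_closure
  -- points of `closure S` have neighbourhoods `Wf f s` separated from some `Vf t`
  have hsep : ∀ x ∈ closure S, ∃ (f : I → I → X) (s t : Finset I), (∀ i j, f i j ∈ S) ∧
      x ∈ Wf f s ∧ Disjoint (Wf f s) (Vf t) := by
    intro x hx
    obtain ⟨u, hu, hxu⟩ : x ∈ ⋃₀ 𝒰 := hcov ▸ mem_univ x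
    obtain ⟨N, hNo, hxN, hNu⟩ := (h𝒰 u hu).exists_closure_subset hI hxu
    have hseq : ∀ i, ∃ a : I → X, (∀ j, a j ∈ N i ∩ S) ∧ x ∈ closure (range a) := by
      intro i
      obtain ⟨A, hA, hAcard, hxA⟩ := ht (N i ∩ S) x
        ((hNo i).inter_closure ⟨hxN i, hx⟩)
      have hAne : Nonempty A := (closure_nonempty_iff.1 ⟨x, hxA⟩).to_subtype
      obtain ⟨e⟩ : #A ≤ #I := hI ▸ hAcard
      refine ⟨fun j => (Function.invFun e j : A), fun j => hA (Subtype.prop _), ?_⟩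
      have : range (fun j => ((Function.invFun e j : A) : X)) = A := by
        rw [range_comp' Subtype.val, (Function.invFun_surjective e.injective).range_eq, image_univ,
          Subtype.range_coe]
      rwa [this]
    choose f hf hxf using hseq
    have hBf : ∃ U ∈ 𝒰, B f ⊆ U := ⟨u, hu, (iInter_mono fun i =>
      closure_mono (range_subset_iff.2 fun j => (hf i j).1)).trans hNu⟩
    obtain ⟨hU, hBW, hWU⟩ := hUW f hBf
    obtain ⟨t, ht⟩ := hcpt.exists_finset_subset hκ (K := I ⊕ I)
      (O := Sum.elim (fun i => (closure (W f i))ᶜ) fun i => (closure (V i))ᶜ)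
      (by simp [hI, add_eq_self hκ])
      (by rintro (i | i) <;> exact isClosed_closure.isOpen_compl) isClosed_univ
      (by
        intro y _
        by_contra hy
        simp only [mem_iUnion, Sum.exists, Sum.elim_inl, Sum.elim_inr, mem_compl_iff, not_or,
          not_exists, not_not] at hy
        exact hne ⟨y, hGO (hVG (mem_iInter.2 hy.2)), U f, ⟨f, fun i j => (hf i j).2, hBf, rfl⟩,
          hWU (mem_iInter.2 hy.1)⟩)
    refine ⟨f, t.toLeft, t.toRight, fun i j => (hf i j).2,
      mem_iInter₂.2 fun i _ => hBW i (mem_iInter.2 hxf), ?_⟩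
    rw [Set.disjoint_left]
    intro y hyW hyV
    obtain ⟨k, hk, hyk⟩ := mem_iUnion₂.1 (ht (mem_univ y))
    rcases k with i | i
    · exact hyk (subset_closure (mem_iInter₂.1 hyW i (by simpa using hk)))
    · exact hyk (subset_closure (mem_iInter₂.1 hyV i (by simpa using hk)))
  let 𝒲 : Finset I → Set (Set X) := fun t =>
    {w | ∃ f s, (∀ i j, f i j ∈ S) ∧ Disjoint (Wf f s) (Vf t) ∧ w = Wf f s}
  have h𝒲o : ∀ t, ∀ w ∈ 𝒲 t, IsOpen w := by
    rintro t _ ⟨f, s, -, -, rfl⟩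
    exact hWfo f s
  obtain ⟨T, hT⟩ := hcpt.exists_finset_subset hκ (K := Finset I) (O := fun t => ⋃₀ 𝒲 t)
    (by rw [mk_finset_of_infinite, hI]) (fun t => isOpen_sUnion (h𝒲o t)) hFc
    (fun x hx => by
      obtain ⟨f, s, t, hfS, hxW, hd⟩ := hsep x hx
      exact mem_iUnion.2 ⟨t, _, ⟨f, s, hfS, hd, rfl⟩, hxW⟩)
  have hcovT : closure S ⊆ ⋃₀ 𝒲 (T.biUnion id) := by
    intro x hx
    obtain ⟨t, htT, _, ⟨f, s, hfS, hd, rfl⟩, hxW⟩ := mem_iUnion₂.1 (hT hx)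
    refine ⟨_, ⟨f, s, hfS, hd.mono_right ?_, rfl⟩, hxW⟩
    exact biInter_subset_biInter_left fun i hi => Finset.mem_biUnion.2 ⟨t, htT, hi⟩
  obtain ⟨𝒱, h𝒱, h𝒱card, hS𝒱⟩ := hwl.exists_subset_closure hFc (h𝒲o _) hcovT
  have h𝒱ne : Nonempty 𝒱 := by
    obtain ⟨_, v, hv, -⟩ := closure_nonempty_iff.1 ⟨x₀, hS𝒱 (subset_closure hx₀S)⟩
    exact ⟨⟨v, hv⟩⟩
  obtain ⟨e⟩ : #𝒱 ≤ #I := hI ▸ h𝒱card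
  have hsurj := Function.invFun_surjective e.injective
  have hmem : ∀ j, ((Function.invFun e j : 𝒱) : Set X) ∈ 𝒲 (T.biUnion id) :=
    fun j => h𝒱 (Subtype.prop _)
  choose f s hfS hd hfs using hmem
  have hD : D s (fun q => f q.1 q.2.1 q.2.2) = ⋃₀ 𝒱 := by
    have : D s (fun q => f q.1 q.2.1 q.2.2) = ⋃ j, ((Function.invFun e j : 𝒱) : Set X) :=
      iUnion_congr fun j => (hfs j).symm
    rw [this, hsurj.iUnion_comp fun v : 𝒱 => (v : Set X), sUnion_eq_iUnion]
  have hcS := hSc s (fun q => f q.1 q.2.1 q.2.2) fun q => hfS q.1 q.2.1 q.2.2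
  have hcD := hc s (fun q => f q.1 q.2.1 q.2.2)
  rw [hD] at hcD
  have hdense : Dense (⋃₀ 𝒱) := by
    by_contra hnd
    exact hcD hnd (hS𝒱 (subset_closure hcS))
  obtain ⟨y, hyV, v, hv, hyv⟩ := hdense.inter_open_nonempty (Vf (T.biUnion id))
    (isOpen_biInter_finset fun i _ => hVo i) ⟨p, mem_iInter₂.2 fun i _ => hpV i⟩
  obtain ⟨_, _, -, hdisj, rfl⟩ := h𝒱 hv
  exact Set.disjoint_left.1 hdisj hyv hyV
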